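/- arXiv:1805.12345 — 3 statements merged into one kernel-verified Lean document; each statement's English description precedes it below -/
import Mathlib

section
/- Let q be a prime power and n a positive integer with gcd(n,q)=1. Let r ≥ 3 and δ ≥ 2 be integers such that (r+δ-1) divides gcd(n, q-1) and gcd(n/(r+δ-1), r+δ-1) divides δ. Then there exists a q-ary cyclic code C of length n, dimension k = rn/(r+δ-1) - 2, and minimum distance d = δ+2, such that C has (r,δ)-locality and d = n - k + 1 - (⌈k/r⌉ - 1)(δ - 1) (i.e., C is an optimal (r,δ)-LRC achieving the Singleton-type bound). -/
open Polynomial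
open scoped Classical

/-- Hamming weight of a vector. -/
noncomputable def wt {F : Type*} [Field F] {n : ℕ} (v : Fin n → F) : ℕ :=
  (Finset.univ.filter (fun i => v i ≠ 0)).card

/-- The minimum distance of the code `Cset` is at least `d`. -/
def MinDistGe {F : Type*} [Field F] {n : ℕ} (Cset : Set (Fin n → F)) (d : ℕ) : Prop :=
  ∀ v ∈ Cset, v ≠ 0 → d ≤ wt v

/-- The minimum distance of the code `Cset` is exactly `d`. -/
def MinDistIs {F : Type*} [Field F] {n : ℕ} (Cset : Set (Fin n → F)) (d : ℕ) : Prop :=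
  MinDistGe Cset d ∧ ∃ v ∈ Cset, v ≠ 0 ∧ wt v = d

/-- The code `Cset` has `(r, δ)`-locality: every coordinate `i` lies in a repair set `R`
of size at most `r + δ - 1` such that the code punctured to `R` has minimum distance `≥ δ`. -/
def HasLocality {F : Type*} [Field F] {n : ℕ} (Cset : Set (Fin n → F)) (r δ : ℕ) : Prop :=
  ∀ i : Fin n, ∃ R : Finset (Fin n), i ∈ R ∧ R.card ≤ r + δ - 1 ∧
    ∀ v ∈ Cset, (∃ j ∈ R, v j ≠ 0) → δ ≤ (R.filter (fun j => v j ≠ 0)).card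

/-- A linear code is cyclic if it is closed under the cyclic shift
`(c_0, ..., c_{n-1}) ↦ (c_{n-1}, c_0, ..., c_{n-2})`. -/
def IsCyclic' {F : Type*} [Field F] {n : ℕ} [NeZero n] (C : Submodule F (Fin n → F)) : Prop :=
  ∀ v ∈ C, (fun i : Fin n => v (i - 1)) ∈ C

/-- Singleton-type optimality for an `[n,k,d]` `(r,δ)`-LRC:
`d = n - k + 1 - (⌈k/r⌉ - 1)(δ - 1)`. -/
def IsOptimalParams (n k d r δ : ℕ) : Prop :=
  (d : ℤ) = (n : ℤ) - (k : ℤ) + 1 - (⌈(k : ℚ) / (r : ℚ)⌉ - 1) * ((δ : ℤ) - 1)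

/-- If a weighted sum of `x i ^ e` over a set `T` vanishes for `L ≥ |T|` consecutive exponents `e`
and the `x i` are distinct and nonzero, then all the weights vanish. -/
theorem eq_zero_of_consecutive_power_sums {F ι : Type*} [Field F] (T : Finset ι) (x f : ι → F)
    (a₀ L : ℕ) (hx : ∀ i ∈ T, x i ≠ 0) (hinj : Set.InjOn x T) (hcard : T.card ≤ L)
    (hsum : ∀ a, a < L → ∑ i ∈ T, f i * x i ^ (a₀ + a) = 0) : ∀ k ∈ T, f k = 0 := by
  intro k hk
  have key : ∀ p : F[X], p.natDegree < L → ∑ i ∈ T, f i * x i ^ a₀ * p.eval (x i) = 0 := by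
    intro p hp
    simp_rw [eval_eq_sum_range' hp, Finset.mul_sum]
    rw [Finset.sum_comm]
    refine Finset.sum_eq_zero fun a ha => ?_
    have := hsum a (Finset.mem_range.mp ha)
    rw [← mul_zero (p.coeff a), ← this, Finset.mul_sum]
    refine Finset.sum_congr rfl fun i _ => ?_
    ring
  have hT : 0 < T.card := Finset.card_pos.mpr ⟨k, hk⟩
  have h := key (∏ i ∈ T.erase k, (X - C (x i))) (by
    rw [natDegree_prod_of_monic _ _ fun i _ => monic_X_sub_C _]
    simp [Finset.card_erase_of_mem hk]
    omega)
  rw [Finset.sum_eq_single_of_mem k hk] at h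
  · have hne : (∏ i ∈ T.erase k, (X - C (x i))).eval (x k) ≠ 0 := by
      rw [eval_prod, Finset.prod_ne_zero_iff]
      intro i hi
      have hi' := Finset.mem_erase.mp hi
      simp only [eval_sub, eval_X, eval_C, sub_ne_zero]
      exact fun e => hi'.1 (hinj hi'.2 hk e.symm)
    simpa [hne, hx k hk] using h
  · intro i hi hik
    rw [eval_prod, Finset.prod_eq_zero (Finset.mem_erase.mpr ⟨hik, hi⟩) (by simp), mul_zero]
/-- The sum of `b ^ (i / ν) * p.coeff i` over the exponents `i` congruent to `s` modulo `ν`: the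
coefficient of `X ^ s` in the remainder of `p` modulo `X ^ ν - b`. -/
noncomputable def classSum {F : Type*} [Field F] (ν s : ℕ) (b : F) : F[X] →ₗ[F] F :=
  Polynomial.lsum fun i => if i % ν = s then LinearMap.mulRight F (b ^ (i / ν)) else 0
theorem classSum_monomial {F : Type*} [Field F] (ν s : ℕ) (b : F) (i : ℕ) (a : F) :
    classSum ν s b (monomial i a) = if i % ν = s then a * b ^ (i / ν) else 0 := by
  simp only [classSum, lsum_apply]
  rw [sum_monomial_index _ _ (by simp)]
  split_ifs <;> simp
theorem classSum_eq_zero_of_dvd {F : Type*} [Field F] {ν : ℕ} (hν : 0 < ν) (s : ℕ) (b : F)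
    {p : F[X]} (hp : X ^ ν - C b ∣ p) : classSum ν s b p = 0 := by
  obtain ⟨u, rfl⟩ := hp
  induction u using Polynomial.induction_on' with
  | add u w hu hw => rw [mul_add, map_add, hu, hw, add_zero]
  | monomial k a =>
    rw [sub_mul, X_pow_mul_monomial, C_mul_monomial, map_sub, classSum_monomial,
      classSum_monomial, Nat.add_mod_right, Nat.add_div_right _ hν]
    split_ifs
    · ring
    · simp
theorem classSum_ofFn {F : Type*} [Field F] {n : ℕ} (ν s : ℕ) (b : F) (v : Fin n → F) :
    classSum ν s b (ofFn n v) =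
      ∑ i ∈ Finset.univ.filter (fun i : Fin n => (i : ℕ) % ν = s ∧ v i ≠ 0),
        v i * b ^ ((i : ℕ) / ν) := by
  rw [ofFn_eq_sum_monomial, map_sum, Finset.sum_filter]
  refine Finset.sum_congr rfl fun i _ => ?_
  rw [classSum_monomial]
  by_cases h : v i = 0 <;> simp [h]
theorem lt_card_class_support {F : Type*} [Field F] {n ν m : ℕ} (hn : n = m * ν) {β : F}
    (hβ : orderOf β = m) (hm : 0 < m) (v : Fin n → F) (s a₀ L : ℕ)
    (hsum : ∀ a, a < L → classSum ν s (β ^ (a₀ + a)) (ofFn n v) = 0)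
    (hne : ∃ j : Fin n, (j : ℕ) % ν = s ∧ v j ≠ 0) :
    L < (Finset.univ.filter fun j : Fin n => (j : ℕ) % ν = s ∧ v j ≠ 0).card := by
  by_contra! hle
  obtain ⟨j, hjs, hj⟩ := hne
  have hβ0 : β ≠ 0 := by
    rintro rfl
    rw [orderOf_zero] at hβ
    omega
  refine hj (eq_zero_of_consecutive_power_sums _ (fun i : Fin n => β ^ ((i : ℕ) / ν)) v a₀ L
    (fun i _ => pow_ne_zero _ hβ0) ?_ hle ?_ j (by simp [hjs, hj]))
  · intro i hi k hk e
    simp only [Finset.coe_filter, Finset.mem_univ, true_and, Set.mem_ofPred_eq] at hi hk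
    have hlt : ∀ l : Fin n, (l : ℕ) / ν < orderOf β := fun l => by
      rw [hβ]; exact Nat.div_lt_of_lt_mul (by have := l.2; rw [mul_comm]; omega)
    have := pow_injOn_Iio_orderOf (hlt i) (hlt k) e
    apply Fin.ext
    rw [← Nat.div_add_mod (i : ℕ) ν, ← Nat.div_add_mod (k : ℕ) ν, this, hi.1, hk.1]
  · intro a ha
    have h := hsum a ha
    rw [classSum_ofFn] at h
    refine (Finset.sum_congr rfl fun i _ => ?_).trans h
    rw [pow_right_comm]
/-- The vectors of length `n` whose associated polynomial is a multiple of `g`. -/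
noncomputable def polyCode {F : Type*} [Field F] (n : ℕ) (g : F[X]) : Submodule F (Fin n → F) :=
  ((Ideal.span {g}).restrictScalars F).comap (ofFn n)
theorem mem_polyCode {F : Type*} [Field F] {n : ℕ} {g : F[X]} {v : Fin n → F} :
    v ∈ polyCode n g ↔ g ∣ ofFn n v := by
  simp [polyCode, Ideal.mem_span_singleton]
theorem isCyclic_polyCode {F : Type*} [Field F] {n : ℕ} [NeZero n] {g : F[X]}
    (hg : g ∣ X ^ n - 1) : IsCyclic' (polyCode n g) := by
  intro v hv
  rw [mem_polyCode] at hv ⊢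
  obtain ⟨N, rfl⟩ : ∃ N, n = N + 1 := ⟨n - 1, by have := NeZero.pos n; omega⟩
  have : ofFn (N + 1) (fun i : Fin (N + 1) => v (i - 1)) =
      X * ofFn (N + 1) v - C (v (Fin.last N)) * (X ^ (N + 1) - 1) := by
    rw [ofFn_eq_sum_monomial, ofFn_eq_sum_monomial, Fin.sum_univ_succ, Fin.sum_univ_castSucc]
    have h1 : ∀ i : Fin N, i.succ - 1 = i.castSucc := fun i => by
      rw [sub_eq_iff_eq_add]; simp
    have h2 : (0 : Fin (N + 1)) - 1 = Fin.last N := by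
      rw [sub_eq_iff_eq_add]; simp
    simp only [h1, h2, mul_add, Finset.mul_sum, Fin.val_succ, Fin.val_castSucc,
      Fin.val_last, ← C_mul_X_pow_eq_monomial, Fin.val_zero]
    have h3 : ∀ i : Fin N, X * (C (v i.castSucc) * X ^ (i : ℕ)) =
        C (v i.castSucc) * X ^ ((i : ℕ) + 1) := fun i => by ring
    simp only [h3]
    ring
  rw [this]
  exact dvd_sub (hv.mul_left _) (hg.mul_left _)
theorem finrank_polyCode {F : Type*} [Field F] {n K : ℕ} {g : F[X]} (hg : g.Monic)
    (hn : n = K + g.natDegree) (hK : 0 < K) : Module.finrank F (polyCode n g) = K := by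
  let f : (Fin K → F) →ₗ[F] (Fin n → F) := toFn n ∘ₗ LinearMap.mulLeft F g ∘ₗ ofFn K
  have hf : ∀ u, ofFn n (f u) = g * ofFn K u := fun u => by
    refine ofFn_comp_toFn_eq_id_of_natDegree_lt ?_
    have := ofFn_natDegree_lt hK u
    exact natDegree_mul_le.trans_lt (by omega)
  have hinj : Function.Injective f := by
    intro u w h
    have h' := hf u
    rw [h, hf w] at h'
    have := mul_left_cancel₀ hg.ne_zero h'
    exact injective_ofFn K this.symm
  have hrange : LinearMap.range f = polyCode n g := by
    ext v
    rw [mem_polyCode]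
    constructor
    · rintro ⟨u, rfl⟩
      exact ⟨_, hf u⟩
    · rintro ⟨p, hp⟩
      have hv : v = toFn n (g * p) := by rw [← hp]; exact (toFn_comp_ofFn_eq_id n v).symm
      refine ⟨toFn K p, ?_⟩
      have hd : p.natDegree < K := by
        by_cases hp0 : p = 0
        · simpa [hp0]
        have := ofFn_natDegree_lt (show 0 < n by omega) v
        rw [hp, hg.natDegree_mul' hp0] at this
        omega
      change toFn n (g * ofFn K (toFn K p)) = v
      rw [ofFn_comp_toFn_eq_id_of_natDegree_lt hd, hv]
  rw [← hrange, LinearMap.finrank_range_of_inj hinj, Module.finrank_fin_fun]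
theorem exists_orderOf_eq_of_dvd {F : Type*} [Field F] [Fintype F] {m : ℕ}
    (h : m ∣ Fintype.card F - 1) : ∃ β : Fˣ, orderOf β = m := by
  obtain ⟨g, hg⟩ := IsCyclic.exists_generator (α := Fˣ)
  have ho : orderOf g = Fintype.card F - 1 := by
    rw [orderOf_eq_card_of_forall_mem_zpowers hg, Nat.card_eq_fintype_card, Fintype.card_units]
  have hpos : 0 < Fintype.card F - 1 := by have := Fintype.one_lt_card (α := F); omega
  obtain ⟨c, hc⟩ := h
  refine ⟨g ^ c, ?_⟩
  have hc0 : c ≠ 0 := by rintro rfl; omega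
  rw [orderOf_pow_of_dvd hc0 (by rw [ho, hc]; exact dvd_mul_left _ _), ho, hc,
    Nat.mul_div_cancel _ (by omega)]
theorem exists_pow_eq_pow_of_gcd_dvd {G : Type*} [Group G] {β : G} {m ν d : ℕ}
    (hβ : β ^ m = 1) (h : Nat.gcd ν m ∣ d) : ∃ γ : G, γ ^ ν = β ^ d := by
  obtain ⟨w, rfl⟩ := h
  refine ⟨β ^ (Nat.gcdA ν m * w), ?_⟩
  have hm : β ^ (m : ℤ) = 1 := by rw [zpow_natCast, hβ]
  rw [← zpow_natCast, ← zpow_mul, ← zpow_natCast, Nat.cast_mul, Nat.gcd_eq_gcd_ab, add_mul,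
    zpow_add, mul_assoc (m : ℤ), zpow_mul β (m : ℤ), hm, one_zpow, mul_one]
  congr 1
  ring

theorem prod_X_sub_C_pow_dvd {F : Type*} [Field F] {β : F} {L : ℕ} (hL : L ≤ orderOf β) :
    ∏ a ∈ Finset.range L, (X - C (β ^ a)) ∣ X ^ orderOf β - 1 := by
  refine Finset.prod_dvd_of_coprime (fun a ha b hb hab => ?_) fun a _ => ?_
  · simp only [Finset.coe_range, Set.mem_Iio] at ha hb
    refine isCoprime_X_sub_C_of_isUnit_sub (IsUnit.mk0 _ (sub_ne_zero.mpr fun e => hab ?_))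
    exact pow_injOn_Iio_orderOf (Set.mem_Iio.mpr (ha.trans_le hL))
      (Set.mem_Iio.mpr (hb.trans_le hL)) e
  · rw [dvd_iff_isRoot]
    simp [pow_right_comm β a, pow_orderOf_eq_one]

/-- The generator polynomial of the code: the factors `X ^ ν - β ^ a`, `1 ≤ a < δ`, give locality,
and the roots `1` and `γ` raise the distance to `δ + 2` when `γ ^ ν = β ^ δ`. -/
noncomputable def lrcGenerator {F : Type*} [Field F] (ν δ : ℕ) (β γ : F) : F[X] :=
  (X - C 1) * (X - C γ) * ∏ a ∈ Finset.range (δ - 1), (X ^ ν - C (β ^ (1 + a)))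

theorem monic_lrcGenerator {F : Type*} [Field F] {ν : ℕ} (hν : 0 < ν) (δ : ℕ) (β γ : F) :
    (lrcGenerator ν δ β γ).Monic :=
  ((monic_X_sub_C _).mul (monic_X_sub_C _)).mul
    (monic_prod_of_monic _ _ fun _ _ => monic_X_pow_sub_C _ hν.ne')

theorem natDegree_lrcGenerator {F : Type*} [Field F] {ν : ℕ} (hν : 0 < ν) (δ : ℕ) (β γ : F) :
    (lrcGenerator ν δ β γ).natDegree = 2 + (δ - 1) * ν := by
  rw [lrcGenerator, Monic.natDegree_mul ((monic_X_sub_C _).mul (monic_X_sub_C _))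
    (monic_prod_of_monic _ _ fun _ _ => monic_X_pow_sub_C _ hν.ne'),
    Monic.natDegree_mul (monic_X_sub_C _) (monic_X_sub_C _),
    natDegree_prod_of_monic _ _ fun _ _ => monic_X_pow_sub_C _ hν.ne']
  simp only [natDegree_X_sub_C, natDegree_X_pow_sub_C, Finset.sum_const, Finset.card_range,
    smul_eq_mul, Nat.reduceAdd]

theorem lrcGenerator_dvd_expand {F : Type*} [Field F] {ν δ : ℕ} (hδ : 1 ≤ δ) {β γ : F}
    (hγ : γ ^ ν = β ^ δ) : lrcGenerator ν δ β γ ∣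
      expand F ν (∏ a ∈ Finset.range (δ + 1), (X - C (β ^ a))) := by
  obtain ⟨e, rfl⟩ : ∃ e, δ = e + 1 := ⟨δ - 1, by omega⟩
  have h1 : X - C (1 : F) ∣ expand F ν (X - C (β ^ 0)) := by
    rw [dvd_iff_isRoot]; simp
  have h2 : X - C γ ∣ expand F ν (X - C (β ^ (e + 1))) := by
    rw [dvd_iff_isRoot]; simp [hγ]
  have h3 : ∏ a ∈ Finset.range (e + 1 - 1), (X ^ ν - C (β ^ (1 + a))) =
      ∏ a ∈ Finset.range e, expand F ν (X - C (β ^ (a + 1))) := by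
    simp [add_comm]
  rw [lrcGenerator, h3, Finset.prod_range_succ, Finset.prod_range_succ', map_mul, map_mul,
    map_prod, mul_comm, ← mul_assoc]
  exact mul_dvd_mul (mul_dvd_mul dvd_rfl h1) h2

theorem classSum_eq_zero_of_lrcGenerator_dvd {F : Type*} [Field F] {ν : ℕ} (hν : 0 < ν) {δ : ℕ}
    {β γ : F} {p : F[X]} (h : lrcGenerator ν δ β γ ∣ p) (s a : ℕ) (ha : a < δ - 1) :
    classSum ν s (β ^ (1 + a)) p = 0 := by
  refine classSum_eq_zero_of_dvd hν s _ (dvd_trans ?_ h)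
  exact (Finset.dvd_prod_of_mem (fun a => X ^ ν - C (β ^ (1 + a)))
    (Finset.mem_range.mpr ha)).trans (dvd_mul_left _ _)

/-- A vector supported on a single residue class modulo `ν` is evaluated through its class sum. -/
theorem eval_eq_pow_mul_classSum {F : Type*} [Field F] {n ν s : ℕ} {v : Fin n → F}
    (hs : ∀ j, v j ≠ 0 → (j : ℕ) % ν = s) (x : F) :
    (ofFn n v).eval x = x ^ s * classSum ν s (x ^ ν) (ofFn n v) := by
  rw [ofFn_eq_sum_monomial, eval_finsetSum, map_sum, Finset.mul_sum]
  refine Finset.sum_congr rfl fun i _ => ?_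
  rw [eval_monomial, classSum_monomial]
  by_cases hi : v i = 0
  · simp [hi]
  · rw [if_pos (hs i hi), mul_left_comm, ← pow_mul, ← pow_add]
    rw [← hs i hi, Nat.mod_add_div]

theorem minDistGe_lrcCode {F : Type*} [Field F] {n ν m δ : ℕ} (hn : n = m * ν) (hν : 0 < ν)
    (hm : 0 < m) (hδ : 2 ≤ δ) {β γ : F} (hβ : orderOf β = m) (hγ0 : γ ≠ 0)
    (hγ : γ ^ ν = β ^ δ) :
    MinDistGe (polyCode n (lrcGenerator ν δ β γ) : Set (Fin n → F)) (δ + 2) := by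
  intro v hv hv0
  have hv := mem_polyCode.mp hv
  obtain ⟨j, hj⟩ := Function.ne_iff.mp hv0
  have hclass := fun s => lt_card_class_support hn hβ hm v s 1 (δ - 1)
    fun a ha => classSum_eq_zero_of_lrcGenerator_dvd hν hv s a ha
  by_cases hs : ∀ k, v k ≠ 0 → (k : ℕ) % ν = (j : ℕ) % ν
  · have hroot : ∀ x : F, X - C x ∣ lrcGenerator ν δ β γ → x ≠ 0 →
        classSum ν ((j : ℕ) % ν) (x ^ ν) (ofFn n v) = 0 := fun x hx hx0 => by
      have := dvd_iff_isRoot.mp (hx.trans hv)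
      rw [IsRoot.def, eval_eq_pow_mul_classSum hs] at this
      exact (mul_eq_zero.mp this).resolve_left (pow_ne_zero _ hx0)
    have := lt_card_class_support hn hβ hm v ((j : ℕ) % ν) 0 (δ + 1) (fun a ha => by
      rcases Nat.eq_zero_or_pos a with rfl | hpos
      · have := hroot 1 (Dvd.intro _ (mul_assoc _ _ _).symm) one_ne_zero
        simpa using this
      rcases Nat.lt_succ_iff_lt_or_eq.mp ha with hlt | rfl
      · have := classSum_eq_zero_of_lrcGenerator_dvd hν hv ((j : ℕ) % ν) (a - 1) (by omega)
        rwa [show 1 + (a - 1) = 0 + a by omega] at this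
      · have := hroot γ ((dvd_mul_left _ _).trans (dvd_mul_right _ _)) hγ0
        rwa [hγ, ← zero_add a] at this) ⟨j, rfl, hj⟩
    exact this.trans_le (Finset.card_le_card fun i => by simp)
  · push Not at hs
    obtain ⟨k, hk, hkj⟩ := hs
    have h1 := hclass _ ⟨j, rfl, hj⟩
    have h2 := hclass _ ⟨k, rfl, hk⟩
    have hdisj : Disjoint
        (Finset.univ.filter fun i : Fin n => (i : ℕ) % ν = (j : ℕ) % ν ∧ v i ≠ 0)
        (Finset.univ.filter fun i : Fin n => (i : ℕ) % ν = (k : ℕ) % ν ∧ v i ≠ 0) := by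
      refine Finset.disjoint_filter.mpr fun i _ hi hi' => hkj ?_
      rw [← hi'.1, hi.1]
    have hle : δ + 2 ≤ (Finset.univ.filter fun i : Fin n => v i ≠ 0).card := by
      refine le_trans ?_ (Finset.card_le_card (Finset.union_subset
        (Finset.monotone_filter_right (p := fun i : Fin n => (i : ℕ) % ν = (j : ℕ) % ν ∧ v i ≠ 0)
          _ fun i _ hi => hi.2)
        (Finset.monotone_filter_right (p := fun i : Fin n => (i : ℕ) % ν = (k : ℕ) % ν ∧ v i ≠ 0)
          _ fun i _ hi => hi.2)))
      rw [Finset.card_union_of_disjoint hdisj]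
      omega
    exact hle

theorem hasLocality_lrcCode {F : Type*} [Field F] {n ν r δ : ℕ} (hn : n = (r + δ - 1) * ν)
    (hν : 0 < ν) (hm : 0 < r + δ - 1) {β γ : F} (hβ : orderOf β = r + δ - 1) :
    HasLocality (polyCode n (lrcGenerator ν δ β γ) : Set (Fin n → F)) r δ := by
  intro i
  refine ⟨Finset.univ.filter fun j : Fin n => (j : ℕ) % ν = (i : ℕ) % ν, by simp, ?_, ?_⟩
  · rw [← Finset.card_range (r + δ - 1)]
    refine Finset.card_le_card_of_injOn (fun j => (j : ℕ) / ν) (fun j _ => ?_) ?_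
    · simp only [Finset.coe_range, Set.mem_Iio]
      exact Nat.div_lt_of_lt_mul (by have := j.2; rw [mul_comm]; omega)
    · intro j hj k hk e
      simp only [Finset.coe_filter, Finset.mem_univ, true_and, Set.mem_ofPred_eq] at hj hk e
      apply Fin.ext
      rw [← Nat.div_add_mod (j : ℕ) ν, ← Nat.div_add_mod (k : ℕ) ν, e, hj, hk]
  · rintro v hv ⟨j, hjR, hj⟩
    have := lt_card_class_support hn hβ hm v ((i : ℕ) % ν) 1 (δ - 1)
      (fun a ha => classSum_eq_zero_of_lrcGenerator_dvd hν (mem_polyCode.mp hv) _ a ha)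
      ⟨j, by simpa using hjR, hj⟩
    rw [Finset.filter_filter]
    omega

theorem wt_toFn_expand_le {F : Type*} [Field F] (n : ℕ) {ν : ℕ} (hν : 0 < ν) (h : F[X]) :
    wt (toFn n (expand F ν h)) ≤ h.natDegree + 1 := by
  rw [← Finset.card_range (h.natDegree + 1)]
  have hsupp : ∀ j : Fin n, toFn n (expand F ν h) j ≠ 0 →
      ν ∣ (j : ℕ) ∧ h.coeff ((j : ℕ) / ν) ≠ 0 := fun j hj => by
    have : (expand F ν h).coeff j ≠ 0 := hj
    rw [coeff_expand hν] at this
    simpa using this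
  refine Finset.card_le_card_of_injOn (fun j => (j : ℕ) / ν) (fun j hj => ?_) ?_
  · have := le_natDegree_of_ne_zero (hsupp j (by simpa using hj)).2
    simp only [Finset.coe_range, Set.mem_Iio]
    omega
  · intro j hj k hk e
    exact Fin.ext ((Nat.div_left_inj (hsupp j (by simpa using hj)).1
      (hsupp k (by simpa using hk)).1).mp e)

theorem isOptimalParams_lrcCode {ν r δ : ℕ} (hν : 0 < ν) (hr : 3 ≤ r) (hδ : 2 ≤ δ) :
    IsOptimalParams ((r + δ - 1) * ν) (r * ν - 2) (δ + 2) r δ := by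
  have h2 : 2 ≤ r * ν := by nlinarith
  have hr0 : (0 : ℚ) < r := by positivity
  have hr3 : (3 : ℚ) ≤ r := by exact_mod_cast hr
  have hceil : ⌈((r * ν - 2 : ℕ) : ℚ) / (r : ℚ)⌉ = (ν : ℤ) := by
    rw [Int.ceil_eq_iff]
    push_cast [Nat.cast_sub h2]
    constructor
    · rw [lt_div_iff₀ hr0]; nlinarith
    · rw [div_le_iff₀ hr0]; nlinarith
  rw [IsOptimalParams, hceil]
  push_cast [Nat.cast_sub h2, Nat.cast_sub (show 1 ≤ r + δ by omega)]
  ring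

/-- **Theorem 2 / main result (ii).** If `gcd(n,q) = 1`, `r ≥ 3`, `δ ≥ 2`,
`(r+δ-1) ∣ gcd(n, q-1)` and `gcd(n/(r+δ-1), r+δ-1) ∣ δ`, then there exists a `q`-ary
optimal cyclic `(r,δ)`-LRC of length `n`, dimension `k = rn/(r+δ-1) - 2` and minimum
distance `δ + 2`, achieving the Singleton-type bound. -/
theorem exists_optimal_cyclic_LRC_dist_delta_add_two (F : Type*) [Field F] [Fintype F]
    (q n r δ : ℕ) (hq : Fintype.card F = q) [NeZero n] (hcop : Nat.Coprime n q)
    (hr : 3 ≤ r) (hδ : 2 ≤ δ) (hdvd : (r + δ - 1) ∣ Nat.gcd n (q - 1))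
    (hgcd : Nat.gcd (n / (r + δ - 1)) (r + δ - 1) ∣ δ) :
    ∃ C : Submodule F (Fin n → F),
      IsCyclic' C ∧
      Module.finrank F C = r * n / (r + δ - 1) - 2 ∧
      MinDistIs (C : Set (Fin n → F)) (δ + 2) ∧
      HasLocality (C : Set (Fin n → F)) r δ ∧
      IsOptimalParams n (r * n / (r + δ - 1) - 2) (δ + 2) r δ := by
  have hm : 0 < r + δ - 1 := by omega
  obtain ⟨ν, hn⟩ := hdvd.trans (Nat.gcd_dvd_left _ _)
  have hν : 0 < ν := Nat.pos_of_ne_zero fun h => NeZero.ne n (by rw [hn, h, mul_zero])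
  rw [hn, Nat.mul_div_cancel_left _ hm] at hgcd
  obtain ⟨β', hβ'⟩ := exists_orderOf_eq_of_dvd (F := F) (m := r + δ - 1)
    (by rw [hq]; exact hdvd.trans (Nat.gcd_dvd_right _ _))
  obtain ⟨γ', hγ'⟩ := exists_pow_eq_pow_of_gcd_dvd (β := β')
    (by rw [← hβ', pow_orderOf_eq_one]) hgcd
  obtain ⟨β, γ, hβ, hγ0, hγ⟩ : ∃ β γ : F, orderOf β = r + δ - 1 ∧ γ ≠ 0 ∧ γ ^ ν = β ^ δ :=
    ⟨β', γ', by rw [orderOf_units, hβ'], γ'.ne_zero, by exact_mod_cast congrArg Units.val hγ'⟩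
  have hk : r * n / (r + δ - 1) = r * ν := by
    rw [hn, mul_left_comm, Nat.mul_div_cancel_left _ hm]
  have hrν : 3 ≤ r * ν := by nlinarith
  have hnk : n = r * ν - 2 + (2 + (δ - 1) * ν) := by
    rw [hn, show r + δ - 1 = r + (δ - 1) by omega, add_mul]
    omega
  have hge := minDistGe_lrcCode hn hν hm hδ hβ hγ0 hγ
  have hdvd_expand := lrcGenerator_dvd_expand (by omega) hγ
  set h : F[X] := ∏ a ∈ Finset.range (δ + 1), (X - C (β ^ a)) with hh
  have hhmonic : h.Monic := monic_prod_of_monic _ _ fun _ _ => monic_X_sub_C _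
  have hhdeg : h.natDegree = δ + 1 := by
    rw [hh, natDegree_prod_of_monic _ _ fun _ _ => monic_X_sub_C _]
    simp only [natDegree_X_sub_C, Finset.sum_const, Finset.card_range, smul_eq_mul, mul_one]
  have hofFn : ofFn n (toFn n (expand F ν h)) = expand F ν h := by
    refine ofFn_comp_toFn_eq_id_of_natDegree_lt ?_
    rw [natDegree_expand, hhdeg, hn]
    exact Nat.mul_lt_mul_of_pos_right (by omega) hν
  have hmem : toFn n (expand F ν h) ∈ polyCode n (lrcGenerator ν δ β γ) := by
    rwa [mem_polyCode, hofFn]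
  have hne : toFn n (expand F ν h) ≠ 0 := fun e => by
    rw [e, ofFn_zero, eq_comm, expand_eq_zero hν] at hofFn
    exact hhmonic.ne_zero hofFn
  refine ⟨polyCode n (lrcGenerator ν δ β γ), isCyclic_polyCode ?_, ?_, ⟨hge, _, hmem, hne, ?_⟩,
    hasLocality_lrcCode hn hν hm hβ, ?_⟩
  · have := map_dvd (expand F ν) (prod_X_sub_C_pow_dvd (β := β) (L := δ + 1) (by omega))
    rw [map_sub, map_one, map_pow, expand_X, ← pow_mul, hβ, mul_comm, ← hn] at this
    exact hdvd_expand.trans this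
  · rw [hk]
    exact finrank_polyCode (monic_lrcGenerator hν δ β γ)
      (by rw [natDegree_lrcGenerator hν]; exact hnk) (by omega)
  · refine le_antisymm ((wt_toFn_expand_le n hν h).trans_eq (by rw [hhdeg])) (hge _ hmem hne)
  · rw [hk, hn]
    exact isOptimalParams_lrcCode hν hr hδ
end

section
/- Let q be a prime power and n a positive integer with gcd(n,q)=1. Let r ≥ 2 and δ ≥ 2 with (r+δ-1) dividing gcd(n, q-1), and set ρ = n/(r+δ-1). Let ξ be a primitive n-th root of unity in the splitting field of x^n - 1 over F_q, and let α = ξ^ρ (so α ∈ F_q is a primitive (r+δ-1)-th root of unity). Then the polynomial g(x) = (x-1)·∏_{i=1}^{δ-1}(x^ρ - α^i) has coefficients in F_q, divides x^n - 1, and the q-ary cyclic code C of length n with generator polynomial g(x) has dimension rρ - 1, minimum distance exactly δ+1, and (r,δ)-locality. -/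
open Polynomial
open scoped Classical

/-- The polynomial with coefficient vector `v`. -/
noncomputable def vecPoly {F : Type*} [Field F] {n : ℕ} (v : Fin n → F) : F[X] :=
  ∑ i : Fin n, C (v i) * X ^ (i : ℕ)

/-- The `q`-ary cyclic code of length `n` with generator polynomial `g`. -/
noncomputable def cyclicCode (F : Type*) [Field F] (n : ℕ) (g : F[X]) :
    Submodule F (Fin n → F) where
  carrier := {v | g ∣ vecPoly v}
  zero_mem' := by
    show g ∣ vecPoly (0 : Fin n → F)
    simp [vecPoly]
  add_mem' := by
    intro a b ha hb
    have h : vecPoly (a + b) = vecPoly a + vecPoly b := by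
      simp [vecPoly, add_mul, Finset.sum_add_distrib]
    show g ∣ vecPoly (a + b)
    rw [h]; exact dvd_add ha hb
  smul_mem' := by
    intro c v hv
    have h : vecPoly (c • v) = C c * vecPoly v := by
      simp [vecPoly, Finset.mul_sum, mul_assoc]
    show g ∣ vecPoly (c • v)
    rw [h]; exact Dvd.dvd.mul_left hv (C c)

theorem vecPoly_coeff {F : Type*} [Field F] {n : ℕ} (v : Fin n → F) (i : Fin n) :
    (vecPoly v).coeff i = v i := by
  simp [vecPoly, coeff_X_pow, Fin.val_inj]

theorem degree_vecPoly_lt {F : Type*} [Field F] {n : ℕ} (v : Fin n → F) :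
    (vecPoly v).degree < n := by
  refine (degree_sum_le _ _).trans_lt ?_
  refine (Finset.sup_lt_iff (WithBot.bot_lt_coe n)).mpr fun i _ => ?_
  exact (degree_C_mul_X_pow_le _ _).trans_lt (Nat.cast_lt.mpr i.2)

theorem vecPoly_coeff_of_degree_lt {F : Type*} [Field F] {n : ℕ} {p : F[X]}
    (hp : p.degree < n) : vecPoly (fun i : Fin n => p.coeff i) = p := by
  ext j
  by_cases hj : j < n
  · exact vecPoly_coeff _ ⟨j, hj⟩
  · have hj' : (n : WithBot ℕ) ≤ j := by exact_mod_cast not_lt.mp hj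
    rw [coeff_eq_zero_of_degree_lt ((degree_vecPoly_lt _).trans_le hj'),
      coeff_eq_zero_of_degree_lt (hp.trans_le hj')]

theorem vecPoly_eq_zero_iff {F : Type*} [Field F] {n : ℕ} {v : Fin n → F} :
    vecPoly v = 0 ↔ v = 0 := by
  constructor
  · intro h
    ext i
    rw [← vecPoly_coeff v i, h]
    simp
  · rintro rfl
    simp [vecPoly]

/-- The encoding map `f ↦ g * f` of a cyclic code, on coefficient vectors. -/
noncomputable def cyclicEncode (F : Type*) [Field F] (n k : ℕ) (g : F[X]) :
    (Fin k → F) →ₗ[F] (Fin n → F) where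
  toFun f i := (g * vecPoly f).coeff i
  map_add' a b := by
    ext i
    have h : vecPoly (a + b) = vecPoly a + vecPoly b := by
      simp [vecPoly, add_mul, Finset.sum_add_distrib]
    simp [h, mul_add]
  map_smul' c v := by
    ext i
    have h : vecPoly (c • v) = C c * vecPoly v := by
      simp [vecPoly, Finset.mul_sum, mul_assoc]
    rw [h, mul_left_comm, coeff_C_mul]
    rfl

theorem vecPoly_cyclicEncode {F : Type*} [Field F] {n k : ℕ} {g : F[X]} (hg : g ≠ 0)
    (hk : g.natDegree + k = n) (f : Fin k → F) :
    vecPoly (cyclicEncode F n k g f) = g * vecPoly f := by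
  refine vecPoly_coeff_of_degree_lt (p := g * vecPoly f) ?_
  rw [degree_mul, degree_eq_natDegree hg, ← hk, Nat.cast_add]
  exact WithBot.add_lt_add_left (by simp) (degree_vecPoly_lt f)

/-- A cyclic code of length `n` has dimension `n - deg g`. -/
theorem finrank_cyclicCode {F : Type*} [Field F] {n k : ℕ} {g : F[X]} (hg : g ≠ 0)
    (hk : g.natDegree + k = n) : Module.finrank F (cyclicCode F n g) = k := by
  have hrange : (cyclicEncode F n k g).range = cyclicCode F n g := by
    ext v
    constructor
    · rintro ⟨f, rfl⟩
      exact ⟨vecPoly f, vecPoly_cyclicEncode hg hk f⟩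
    · rintro ⟨h, hv⟩
      have hdeg : h.degree < k := by
        have hlt := degree_vecPoly_lt v
        rw [hv, degree_mul, degree_eq_natDegree hg, ← hk, Nat.cast_add] at hlt
        exact lt_of_add_lt_add_left hlt
      refine ⟨fun i => h.coeff i, ?_⟩
      ext i
      change (g * vecPoly _).coeff i = v i
      rw [vecPoly_coeff_of_degree_lt hdeg, ← hv, vecPoly_coeff]
  have hinj : Function.Injective (cyclicEncode F n k g) := by
    rw [injective_iff_map_eq_zero]
    intro f hf
    have h := vecPoly_cyclicEncode hg hk f
    rw [hf, vecPoly_eq_zero_iff.mpr rfl, eq_comm, mul_eq_zero] at h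
    exact vecPoly_eq_zero_iff.mp (h.resolve_left hg)
  rw [← hrange, LinearMap.finrank_range_of_inj hinj, Module.finrank_fin_fun]

/-- A nonzero vector whose first `d` weighted power sums at distinct nodes vanish has weight
greater than `d`. -/
theorem lt_card_support_of_power_sums_eq_zero {ι K : Type*} [Fintype ι] [Field K] {x c : ι → K}
    (hx : Function.Injective x) {d : ℕ} (h : ∀ j < d, ∑ i, c i * x i ^ j = 0) {s : ι}
    (hs : c s ≠ 0) : d < (Finset.univ.filter fun i => c i ≠ 0).card := by
  by_contra! hd
  set S := Finset.univ.filter fun i => c i ≠ 0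
  have hsS : s ∈ S := by simp [S, hs]
  set P : K[X] := ∏ t ∈ S.erase s, (X - C (x t))
  have hP : P.natDegree < d := by
    rw [natDegree_finsetProd_X_sub_C_eq_card, Finset.card_erase_of_mem hsS]
    have := Finset.card_pos.mpr ⟨s, hsS⟩
    omega
  have hsum : ∑ i, c i * P.eval (x i) = 0 := by
    simp_rw [eval_eq_sum_range' hP, Finset.mul_sum]
    rw [Finset.sum_comm]
    refine Finset.sum_eq_zero fun j hj => ?_
    rw [← mul_zero (P.coeff j), ← h j (Finset.mem_range.mp hj), Finset.mul_sum]
    exact Finset.sum_congr rfl fun i _ => mul_left_comm _ _ _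
  rw [Finset.sum_eq_single s] at hsum
  · refine mul_ne_zero hs ?_ hsum
    rw [eval_prod, Finset.prod_ne_zero_iff]
    intro t ht
    simpa [sub_eq_zero] using fun he => (Finset.ne_of_mem_erase ht) (hx he).symm
  · intro i _ his
    by_cases hi : c i = 0
    · rw [hi, zero_mul]
    · have hmem : i ∈ S.erase s := by simp [S, hi, his]
      rw [eval_prod, Finset.prod_eq_zero hmem (by simp), mul_zero]
  · simp

/-- A polynomial in `X ^ ρ` has few nonzero coefficients. -/
theorem wt_coeff_expand_le {F : Type*} [Field F] (n : ℕ) {ρ : ℕ} (hρ : 0 < ρ) (w : F[X]) :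
    wt (fun i : Fin n => (expand F ρ w).coeff i) ≤ w.natDegree + 1 := by
  have hdvd : ∀ i : Fin n, (expand F ρ w).coeff i ≠ 0 → ρ ∣ i ∧ w.coeff (i / ρ) ≠ 0 := by
    intro i hi
    rw [coeff_expand hρ] at hi
    simpa using hi
  rw [wt, ← Finset.card_range (w.natDegree + 1)]
  refine Finset.card_le_card_of_injOn (fun i : Fin n => (i : ℕ) / ρ) ?_ ?_
  · intro i hi
    have h := (hdvd i (by simpa using hi)).2
    simpa [Nat.lt_succ_iff] using le_natDegree_of_ne_zero h
  · intro i hi j hj hij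
    have hi' := (hdvd i (by simpa using hi)).1
    have hj' := (hdvd j (by simpa using hj)).1
    exact Fin.ext ((Nat.div_left_inj hi' hj').mp hij)

/-- Divisibility by `X ^ ρ - b` gives a parity check on each residue class modulo `ρ`. -/
theorem sum_residue_class_eq_zero {F : Type*} [Field F] {N ρ : ℕ} {v : Fin (N * ρ) → F} {b : F}
    (hρ : 0 < ρ) (h : X ^ ρ - C b ∣ vecPoly v) (a : Fin ρ) :
    ∑ m : Fin N, v (finProdFinEquiv (m, a)) * b ^ (m : ℕ) = 0 := by
  set s : Fin ρ → F := fun a => ∑ m : Fin N, v (finProdFinEquiv (m, a)) * b ^ (m : ℕ)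
  have hdiff : X ^ ρ - C b ∣ vecPoly v - vecPoly s := by
    have hv : vecPoly v - vecPoly s = ∑ a : Fin ρ, ∑ m : Fin N,
        C (v (finProdFinEquiv (m, a))) * X ^ (a : ℕ) * ((X ^ ρ) ^ (m : ℕ) - C b ^ (m : ℕ)) := by
      rw [vecPoly, vecPoly, ← finProdFinEquiv.sum_comp, Fintype.sum_prod_type_right,
        ← Finset.sum_sub_distrib]
      refine Finset.sum_congr rfl fun a _ => ?_
      simp only [s, map_sum, Finset.sum_mul, ← Finset.sum_sub_distrib]
      refine Finset.sum_congr rfl fun m _ => ?_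
      simp only [finProdFinEquiv_apply_val, map_mul, map_pow, pow_add, pow_mul]
      ring
    rw [hv]
    exact Finset.dvd_sum fun a _ => Finset.dvd_sum fun m _ =>
      Dvd.dvd.mul_left (sub_dvd_pow_sub_pow _ _ _) _
  have hs : vecPoly s = 0 := by
    refine eq_zero_of_dvd_of_degree_lt ((dvd_sub_right h).mp hdiff) ?_
    rw [degree_X_pow_sub_C hρ]
    exact degree_vecPoly_lt s
  exact congrFun (vecPoly_eq_zero_iff.mp hs) a

theorem mem_range_algebraMap_of_pow_card_eq_self {F K : Type*} [Field F] [Fintype F] [Field K]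
    [Algebra F K] {α : K} (h : α ^ Fintype.card F = α) : ∃ β : F, algebraMap F K β = α := by
  by_contra! hα
  have hcard := Fintype.one_lt_card (α := F)
  have hle := card_le_degree_of_subset_roots (p := (X ^ Fintype.card F - X : K[X]))
    (Z := insert α (Finset.univ.image (algebraMap F K))) (by
      intro x hx
      rw [mem_roots (FiniteField.X_pow_card_sub_X_ne_zero K hcard), IsRoot.def]
      simp only [Finset.mem_val, Finset.mem_insert, Finset.mem_image, Finset.mem_univ,
        true_and] at hx
      rcases hx with rfl | ⟨a, rfl⟩
      · simp [h]
      · simp [← map_pow, FiniteField.pow_card])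
  rw [FiniteField.X_pow_card_sub_X_natDegree_eq K hcard,
    Finset.card_insert_of_notMem (by simpa using hα),
    Finset.card_image_of_injective _ (algebraMap F K).injective, Finset.card_univ] at hle
  omega

theorem prod_X_pow_sub_dvd {F : Type*} [Field F] {N ρ d : ℕ} {β : F} (hβ : IsPrimitiveRoot β N)
    (hd : d ≤ N) : ∏ i ∈ Finset.range d, ((X : F[X]) ^ ρ - C (β ^ i)) ∣ X ^ (N * ρ) - 1 := by
  have h : ∏ i ∈ Finset.range d, ((X : F[X]) - C (β ^ i)) ∣ X ^ N - 1 := by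
    refine Finset.prod_dvd_of_coprime ?_ fun i _ => ?_
    · intro i hi j hj hij
      refine isCoprime_X_sub_C_of_isUnit_sub (sub_ne_zero.mpr fun he => hij ?_).isUnit
      simp only [Finset.coe_range, Set.mem_Iio] at hi hj
      exact hβ.pow_inj (hi.trans_le hd) (hj.trans_le hd) he
    · rw [dvd_iff_isRoot]
      simp [← pow_mul, mul_comm i, pow_mul β, hβ.pow_eq_one]
  have hcomp := map_dvd (compRingHom (X ^ ρ)) h
  simpa [map_prod, ← pow_mul, mul_comm ρ] using hcomp

/-- Explicit construction of Theorem 1: with `ρ = n/(r+δ-1)`, `ξ` a primitive `n`-th root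
of unity in the splitting field of `X^n - 1` over `F_q`, and `α = ξ^ρ`, the polynomial
`g(x) = (x-1)·∏_{i=1}^{δ-1}(x^ρ - α^i)` has coefficients in `F_q`, divides `x^n - 1`, and
the `q`-ary cyclic code with generator polynomial `g` has dimension `rρ - 1`, minimum
distance exactly `δ + 1`, and `(r,δ)`-locality. -/
theorem cyclic_LRC_construction_theorem1 (F K : Type*) [Field F] [Fintype F]
    [Field K] [Algebra F K]
    (q n r δ : ℕ) (hq : Fintype.card F = q) (hn : 0 < n) (hcop : Nat.Coprime n q)
    (hr : 2 ≤ r) (hδ : 2 ≤ δ) (hdvd : (r + δ - 1) ∣ Nat.gcd n (q - 1))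
    (ρ : ℕ) (hρ : ρ = n / (r + δ - 1))
    (ξ : K) (hξ : IsPrimitiveRoot ξ n) (α : K) (hα : α = ξ ^ ρ) :
    ∃ g : F[X],
      g.map (algebraMap F K)
        = (X - 1) * ∏ i ∈ Finset.Icc 1 (δ - 1), (X ^ ρ - C (α ^ i)) ∧
      g ∣ X ^ n - 1 ∧
      Module.finrank F (cyclicCode F n g) = r * ρ - 1 ∧
      MinDistIs ((cyclicCode F n g : Submodule F (Fin n → F)) : Set (Fin n → F)) (δ + 1) ∧
      HasLocality ((cyclicCode F n g : Submodule F (Fin n → F)) : Set (Fin n → F)) r δ := by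
  set N := r + δ - 1 with hN
  have hN0 : 0 < N := by omega
  obtain ⟨ρ', rfl⟩ : N ∣ n := hdvd.trans (Nat.gcd_dvd_left _ _)
  obtain rfl : ρ = ρ' := by rw [hρ, Nat.mul_div_cancel_left _ hN0]
  have hρ0 : 0 < ρ := Nat.pos_of_mul_pos_left hn
  have hαN : IsPrimitiveRoot α N := hα ▸ hξ.pow hn (mul_comm _ _)
  obtain ⟨β, hβα⟩ : ∃ β : F, algebraMap F K β = α := by
    refine mem_range_algebraMap_of_pow_card_eq_self ?_
    have h1 : α ^ (q - 1) = 1 :=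
      (hαN.pow_eq_one_iff_dvd _).mpr (hdvd.trans (Nat.gcd_dvd_right _ _))
    rw [hq, ← Nat.sub_add_cancel (hq ▸ Fintype.card_pos : 0 < q), pow_succ, h1, one_mul]
  have hβ : IsPrimitiveRoot β N :=
    IsPrimitiveRoot.of_map_of_injective (hβα ▸ hαN) (algebraMap F K).injective
  set G : F[X] := ∏ i ∈ Finset.Icc 1 (δ - 1), (X ^ ρ - C (β ^ i)) with hG
  have hfull : ∏ i ∈ Finset.range δ, ((X : F[X]) ^ ρ - C (β ^ i)) = (X ^ ρ - 1) * G := by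
    rw [Finset.range_eq_Ico, Finset.prod_eq_prod_Ico_succ_bot (by omega), hG]
    simp only [pow_zero, map_one, zero_add]
    congr 2
  have hgfull : (X - 1) * G ∣ ∏ i ∈ Finset.range δ, ((X : F[X]) ^ ρ - C (β ^ i)) :=
    hfull ▸ mul_dvd_mul_right (by simpa using sub_dvd_pow_sub_pow (X : F[X]) 1 ρ) G
  have hGmonic : G.Monic := monic_prod_of_monic _ _ fun i _ => monic_X_pow_sub_C _ hρ0.ne'
  have hX1 : (X - 1 : F[X]).Monic := by simpa using monic_X_sub_C (1 : F)
  have hgmonic : ((X - 1) * G).Monic := hX1.mul hGmonic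
  have hmap : ((X - 1) * G).map (algebraMap F K)
      = (X - 1) * ∏ i ∈ Finset.Icc 1 (δ - 1), (X ^ ρ - C (α ^ i)) := by
    simp [hG, Polynomial.map_prod, hβα]
  have hGdeg : G.natDegree = (δ - 1) * ρ := by
    rw [hG, natDegree_prod_of_monic _ _ fun i _ => monic_X_pow_sub_C _ hρ0.ne']
    simp only [natDegree_X_pow_sub_C, Finset.sum_const, Nat.card_Icc, smul_eq_mul]
    rfl
  have hgdeg : ((X - 1) * G).natDegree + (r * ρ - 1) = N * ρ := by
    rw [hX1.natDegree_mul hGmonic, hGdeg]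
    have h1 : (X - 1 : F[X]).natDegree = 1 := by simpa using natDegree_X_sub_C (1 : F)
    have h2 : N * ρ = (δ - 1) * ρ + r * ρ := by
      rw [← add_mul]
      congr 1
      omega
    have h3 : 0 < r * ρ := by positivity
    omega
  have hdist : MinDistGe ((cyclicCode F (N * ρ) ((X - 1) * G) :
      Submodule F (Fin (N * ρ) → F)) : Set (Fin (N * ρ) → F)) (δ + 1) := by
    intro v hv hv0
    obtain ⟨s, hs⟩ := Function.ne_iff.mp hv0
    have hroot : ∀ j < δ, ∑ i, algebraMap F K (v i) * (ξ ^ (i : ℕ)) ^ j = 0 := by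
      intro j hj
      have hev : eval (ξ ^ j) ((vecPoly v).map (algebraMap F K)) = 0 := by
        refine eval_eq_zero_of_dvd_of_eval_eq_zero (map_dvd (mapRingHom (algebraMap F K)) hv) ?_
        rw [coe_mapRingHom, hmap, eval_mul]
        rcases Nat.eq_zero_or_pos j with rfl | hj0
        · simp
        · rw [eval_prod, Finset.prod_eq_zero (i := j) (by simp; omega), mul_zero]
          simp [hα, ← pow_mul, mul_comm]
      rw [← hev]
      simp only [vecPoly, Polynomial.map_sum, eval_finsetSum, Polynomial.map_mul, map_C,
        Polynomial.map_pow, map_X, eval_mul, eval_C, eval_pow, eval_X, ← pow_mul, mul_comm j]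
    have hlt := lt_card_support_of_power_sums_eq_zero (x := fun i : Fin (N * ρ) => ξ ^ (i : ℕ))
      (fun i j hij => Fin.ext (hξ.pow_inj i.2 j.2 hij)) hroot (s := s) (by simpa using hs)
    simpa [wt] using hlt
  refine ⟨(X - 1) * G, hmap, ?_, finrank_cyclicCode hgmonic.ne_zero hgdeg, ⟨hdist, ?_⟩, ?_⟩
  · exact hgfull.trans (prod_X_pow_sub_dvd hβ (by omega))
  · set w : F[X] := ∏ i ∈ Finset.range δ, (X - C (β ^ i)) with hw
    have hwdeg : w.natDegree = δ := by
      rw [hw, natDegree_finsetProd_X_sub_C_eq_card, Finset.card_range]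
    have hwmonic : w.Monic := monic_prod_X_sub_C _ _
    have hexp : expand F ρ w = ∏ i ∈ Finset.range δ, (X ^ ρ - C (β ^ i)) := by
      simp [hw, map_prod]
    have hlt : (expand F ρ w).degree < (N * ρ : ℕ) := by
      refine degree_le_natDegree.trans_lt (Nat.cast_lt.mpr ?_)
      rw [natDegree_expand, hwdeg]
      exact Nat.mul_lt_mul_of_pos_right (by omega) hρ0
    have hvec := vecPoly_coeff_of_degree_lt hlt
    have hmem : (fun i : Fin (N * ρ) => (expand F ρ w).coeff i) ∈
        cyclicCode F (N * ρ) ((X - 1) * G) := by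
      change (X - 1) * G ∣ vecPoly _
      rw [hvec, hexp]
      exact hgfull
    have hne : (fun i : Fin (N * ρ) => (expand F ρ w).coeff i) ≠ 0 := fun h0 =>
      (expand_ne_zero hρ0).mpr hwmonic.ne_zero (hvec ▸ vecPoly_eq_zero_iff.mpr h0)
    exact ⟨_, hmem, hne,
      le_antisymm (hwdeg ▸ wt_coeff_expand_le (N * ρ) hρ0 w) (hdist _ hmem hne)⟩
  · intro i
    obtain ⟨⟨m₀, a⟩, rfl⟩ := finProdFinEquiv.surjective i
    let e : Fin N ↪ Fin (N * ρ) :=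
      ⟨fun m => finProdFinEquiv (m, a), fun m m' h => by simpa using h⟩
    refine ⟨Finset.univ.map e, Finset.mem_map_of_mem e (Finset.mem_univ m₀), by simp [hN], ?_⟩
    rintro v hv ⟨j, hj, hvj⟩
    obtain ⟨s, -, rfl⟩ := Finset.mem_map.mp hj
    have hcheck : ∀ j < δ - 1,
        ∑ m : Fin N, (v (e m) * β ^ (m : ℕ)) * (β ^ (m : ℕ)) ^ j = 0 := by
      intro j hj
      have hdiv : X ^ ρ - C (β ^ (j + 1)) ∣ vecPoly v :=
        ((Finset.dvd_prod_of_mem (fun i => (X : F[X]) ^ ρ - C (β ^ i))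
          (Finset.mem_Icc.mpr ⟨by omega, by omega⟩)).trans (dvd_mul_left G (X - 1))).trans hv
      rw [← sum_residue_class_eq_zero hρ0 hdiv a]
      refine Finset.sum_congr rfl fun m _ => ?_
      change v (finProdFinEquiv (m, a)) * _ * _ = _
      ring
    have hβ0 : β ≠ 0 := hβ.ne_zero hN0.ne'
    have hlt := lt_card_support_of_power_sums_eq_zero (x := fun m : Fin N => β ^ (m : ℕ))
      (fun i j hij => Fin.ext (hβ.pow_inj i.2 j.2 hij)) hcheck (s := s)
      (mul_ne_zero hvj (pow_ne_zero _ hβ0))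
    rw [Finset.filter_map, Finset.card_map]
    simp only [ne_eq, mul_eq_zero, pow_eq_zero_iff', hβ0, false_and, or_false] at hlt
    simp only [Function.comp_def, ne_eq]
    omega
end

section
/- Let q be a prime power and n a positive integer with gcd(n,q)=1. Let r ≥ 3 and δ ≥ 2 with (r+δ-1) dividing gcd(n, q-1) and gcd(n/(r+δ-1), r+δ-1) dividing δ; set ρ = n/(r+δ-1). Let ξ be a primitive n-th root of unity in the splitting field of x^n - 1 over F_q, let α = ξ^ρ ∈ F_q (a primitive (r+δ-1)-th root of unity), let a, b be integers with aρ + b(r+δ-1) = δ, and let γ = α^a ∈ F_q. Then no nonzero polynomial c(x) ∈ F_q[x] of degree less than n having at most δ+1 nonzero coefficients is divisible by g(x) = (x-1)(x-γ)·∏_{i=1}^{δ-1}(x^ρ - α^i); equivalently, the q-ary cyclic code with generator polynomial g(x) has minimum distance at least δ+2. -/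
open Polynomial

/-- A Vandermonde argument: `N` vanishing power moments at `N` or fewer distinct nodes force all
weights to vanish. -/
theorem eq_zero_of_sum_mul_pow_eq_zero {K ι : Type*} [Field K] {J : Finset ι} {x f : ι → K}
    (hx : Set.InjOn x J) {N : ℕ} (hN : J.card ≤ N)
    (h : ∀ i < N, ∑ j ∈ J, f j * x j ^ i = 0) : ∀ j ∈ J, f j = 0 := by
  classical
  intro j hj
  set p : K[X] := ∏ k ∈ J.erase j, (X - C (x k)) with hp
  have hdeg : p.natDegree < N := by
    rw [hp, natDegree_finsetProd_X_sub_C_eq_card, Finset.card_erase_of_mem hj]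
    have := Finset.card_pos.2 ⟨j, hj⟩
    omega
  have hsum : ∑ k ∈ J, f k * p.eval (x k) = 0 := by
    simp_rw [eval_eq_sum_range' hdeg, Finset.mul_sum]
    rw [Finset.sum_comm]
    refine Finset.sum_eq_zero fun i hi => ?_
    rw [← mul_zero (p.coeff i), ← h i (Finset.mem_range.1 hi), Finset.mul_sum]
    exact Finset.sum_congr rfl fun k _ => by ring
  rw [Finset.sum_eq_single_of_mem j hj] at hsum
  · refine (mul_eq_zero.1 hsum).resolve_right ?_
    rw [hp, eval_prod]
    refine Finset.prod_ne_zero_iff.2 ?_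
    intro k hk
    rw [eval_sub, eval_X, eval_C, sub_ne_zero]
    exact fun he => Finset.ne_of_mem_erase hk (hx hj (Finset.mem_of_mem_erase hk) he).symm
  · intro k hk hkj
    rw [hp, eval_prod, Finset.prod_eq_zero (Finset.mem_erase.2 ⟨hkj, hk⟩) (by simp), mul_zero]

/-- If `X ^ ρ - u` divides `P`, then it also divides the part of `P` supported on each residue
class modulo `ρ`. -/
theorem sum_residue_class_eq_zero_of_dvd {K : Type*} [Field K] {ρ : ℕ} (hρ : 0 < ρ) (s : ℕ)
    {u : K} {P : K[X]} (h : X ^ ρ - C u ∣ P) :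
    ∑ e ∈ P.support with e % ρ = s, P.coeff e * u ^ (e / ρ) = 0 := by
  let φ : K[X] →ₗ[K] K := lsum fun e => if e % ρ = s then u ^ (e / ρ) • LinearMap.id else 0
  have hφ : ∀ Q : K[X], φ (X ^ ρ * Q) = φ (C u * Q) := by
    intro Q
    induction Q using Polynomial.induction_on' with
    | add p q hp hq => rw [mul_add, mul_add, map_add, map_add, hp, hq]
    | monomial e a =>
      rw [X_pow_mul_monomial, C_mul_monomial]
      simp only [φ, lsum_apply]
      rw [sum_monomial_index _ _ (by simp), sum_monomial_index _ _ (by simp),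
        Nat.add_mod_right, Nat.add_div_right _ hρ]
      split_ifs
      · simp only [LinearMap.smul_apply, LinearMap.id_apply, smul_eq_mul]
        ring
      · rfl
  obtain ⟨Q, rfl⟩ := h
  have hzero : φ ((X ^ ρ - C u) * Q) = 0 := by rw [sub_mul, map_sub, hφ, sub_self]
  rw [← hzero, Finset.sum_filter]
  simp only [φ, lsum_apply, Polynomial.sum]
  refine Finset.sum_congr rfl fun e _ => ?_
  split_ifs
  · simp [mul_comm]
  · rfl

/-- A nonzero root of a polynomial supported on one residue class `s` modulo `ρ` gives a root of
the polynomial obtained by dividing out `X ^ s` and substituting `X` for `X ^ ρ`. -/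
theorem sum_coeff_mul_pow_div_eq_zero {K : Type*} [Field K] {ρ s : ℕ} {P : K[X]}
    (hs : ∀ e ∈ P.support, e % ρ = s) {x : K} (hx : x ≠ 0) (h : P.eval x = 0) :
    ∑ e ∈ P.support, P.coeff e * (x ^ ρ) ^ (e / ρ) = 0 := by
  refine (mul_eq_zero.1 ?_).resolve_left (pow_ne_zero s hx)
  rw [← h, eval_eq_sum, Polynomial.sum, Finset.mul_sum]
  refine Finset.sum_congr rfl fun e he => ?_
  have hpow : x ^ e = (x ^ ρ) ^ (e / ρ) * x ^ s := by
    rw [← pow_mul, ← pow_add, ← hs e he, Nat.div_add_mod]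
  rw [hpow]
  ring

/-- On a residue class modulo `ρ`, the exponents of `P` are separated by `α ^ (e / ρ)`. -/
theorem injOn_pow_div {K : Type*} [Field K] {m ρ : ℕ} {α : K} (hα : IsPrimitiveRoot α m)
    {J : Finset ℕ} (hJ : ∀ e ∈ J, e < ρ * m) {s : ℕ} (hs : ∀ e ∈ J, e % ρ = s) :
    Set.InjOn (fun e => α ^ (e / ρ)) J := by
  intro e he e' he' h
  have hdiv : e / ρ = e' / ρ :=
    hα.pow_inj (Nat.div_lt_of_lt_mul (hJ e he)) (Nat.div_lt_of_lt_mul (hJ e' he')) h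
  rw [← Nat.div_add_mod e ρ, ← Nat.div_add_mod e' ρ, hdiv, hs e he, hs e' he']

/-- Each residue class modulo `ρ` meeting the support of a multiple of
`(X ^ ρ - α) ⋯ (X ^ ρ - α ^ (δ - 1))` contains at least `δ` exponents of it. -/
theorem le_card_residue_class {K : Type*} [Field K] {m ρ δ : ℕ} (hρ : 0 < ρ) {α : K}
    (hα : IsPrimitiveRoot α m) (hα0 : α ≠ 0) {P : K[X]} (hP : ∀ e ∈ P.support, e < ρ * m)
    (hdvd : ∀ i ∈ Finset.Icc 1 (δ - 1), X ^ ρ - C (α ^ i) ∣ P) {e : ℕ} (he : e ∈ P.support) :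
    δ ≤ (P.support.filter (· % ρ = e % ρ)).card := by
  by_contra! hlt
  have hinj : Set.InjOn (fun k => α ^ (k / ρ)) (P.support.filter (· % ρ = e % ρ)) :=
    injOn_pow_div hα (fun k hk => hP k (Finset.mem_filter.1 hk).1)
      fun k hk => (Finset.mem_filter.1 hk).2
  have hzero := eq_zero_of_sum_mul_pow_eq_zero (f := fun k => P.coeff k * α ^ (k / ρ))
    (N := δ - 1) hinj (by omega) (fun i hi => by
      rw [← sum_residue_class_eq_zero_of_dvd hρ (e % ρ)
        (hdvd (i + 1) (Finset.mem_Icc.2 (by omega)))]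
      refine Finset.sum_congr rfl fun k _ => ?_
      rw [pow_right_comm α (i + 1), pow_succ']
      ring) e (Finset.mem_filter.2 ⟨he, rfl⟩)
  exact mem_support_iff.1 he ((mul_eq_zero.1 hzero).resolve_right (pow_ne_zero _ hα0))

/-- A nonzero polynomial of degree less than `ρ * m` that is divisible by every `X ^ ρ - α ^ i`,
`1 ≤ i < δ`, and vanishes at `1` and at some `γ` with `γ ^ ρ = α ^ δ` has at least `δ + 2`
nonzero coefficients. -/
theorem lt_card_support_of_dvd {K : Type*} [Field K] {m ρ δ : ℕ} (hδ : 2 ≤ δ) (hρ : 0 < ρ)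
    {α γ : K} (hα : IsPrimitiveRoot α m) (hα0 : α ≠ 0) (hγ0 : γ ≠ 0) (hγρ : γ ^ ρ = α ^ δ)
    {P : K[X]} (hP0 : P ≠ 0) (hP : ∀ e ∈ P.support, e < ρ * m)
    (hdvd : ∀ i ∈ Finset.Icc 1 (δ - 1), X ^ ρ - C (α ^ i) ∣ P)
    (hone : P.eval 1 = 0) (hgamma : P.eval γ = 0) : δ + 1 < P.support.card := by
  by_contra! hcard
  obtain ⟨e₀, he₀⟩ := nonempty_support_iff.2 hP0
  have hres : ∀ e ∈ P.support, e % ρ = e₀ % ρ := by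
    intro e he
    by_contra hne
    have hdisj : Disjoint (P.support.filter (· % ρ = e % ρ))
        (P.support.filter (· % ρ = e₀ % ρ)) :=
      Finset.disjoint_filter.2 fun k _ h h' => hne (h.symm.trans h')
    have hle := Finset.card_le_card
      (Finset.union_subset (Finset.filter_subset (· % ρ = e % ρ) P.support)
        (Finset.filter_subset (· % ρ = e₀ % ρ) P.support))
    rw [Finset.card_union_of_disjoint hdisj] at hle
    have h₁ := le_card_residue_class hρ hα hα0 hP hdvd he
    have h₂ := le_card_residue_class hρ hα hα0 hP hdvd he₀
    omega
  have hfilter : P.support.filter (· % ρ = e₀ % ρ) = P.support := Finset.filter_true_of_mem hres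
  have hinj : Set.InjOn (fun k => α ^ (k / ρ)) P.support := injOn_pow_div hα hP hres
  refine mem_support_iff.1 he₀ (eq_zero_of_sum_mul_pow_eq_zero (f := P.coeff) hinj hcard
    (fun i hi => ?_) e₀ he₀)
  have hswap : ∀ k, (α ^ (k / ρ)) ^ i = (α ^ i) ^ (k / ρ) := fun k => pow_right_comm α _ _
  simp only [hswap]
  rcases Nat.eq_zero_or_pos i with rfl | hi0
  · simpa using sum_coeff_mul_pow_div_eq_zero hres one_ne_zero hone
  · rcases Nat.lt_succ_iff_lt_or_eq.1 hi with hi' | rfl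
    · have := sum_residue_class_eq_zero_of_dvd hρ (e₀ % ρ)
        (hdvd i (Finset.mem_Icc.2 (by omega)))
      rwa [hfilter] at this
    · rw [← hγρ]
      exact sum_coeff_mul_pow_div_eq_zero hres hγ0 hgamma

/-- The key step of Theorem 2: with `ρ = n/(r+δ-1)`, `gcd(ρ, r+δ-1) ∣ δ`, `ξ` a primitive
`n`-th root of unity, `α = ξ^ρ`, `aρ + b(r+δ-1) = δ` and `γ = α^a`, no nonzero polynomial
`c(x) ∈ F_q[x]` of degree `< n` with at most `δ + 1` nonzero coefficients is divisible by
`g(x) = (x-1)(x-γ)·∏_{i=1}^{δ-1}(x^ρ - α^i)`; equivalently, the `q`-ary cyclic code with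
generator polynomial `g` has minimum distance at least `δ + 2`. -/
theorem min_dist_ge_delta_add_two (F K : Type*) [Field F] [Fintype F] [Field K] [Algebra F K]
    (q n r δ : ℕ) (hq : Fintype.card F = q) (hn : 0 < n) (hcop : Nat.Coprime n q)
    (hr : 3 ≤ r) (hδ : 2 ≤ δ) (hdvd : (r + δ - 1) ∣ Nat.gcd n (q - 1))
    (ρ : ℕ) (hρ : ρ = n / (r + δ - 1))
    (hgcd : Nat.gcd ρ (r + δ - 1) ∣ δ)
    (ξ : K) (hξ : IsPrimitiveRoot ξ n) (α : K) (hα : α = ξ ^ ρ)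
    (a b : ℤ) (hab : a * (ρ : ℤ) + b * ((r + δ - 1 : ℕ) : ℤ) = (δ : ℤ))
    (γ : K) (hγ : γ = α ^ a) :
    ∀ c : F[X], c ≠ 0 → c.natDegree < n → c.support.card ≤ δ + 1 →
      ¬ ((X - 1) * (X - C γ) * ∏ i ∈ Finset.Icc 1 (δ - 1), (X ^ ρ - C (α ^ i))
          ∣ c.map (algebraMap F K)) := by
  intro c hc hdeg hcard hdvd'
  obtain ⟨m, hm⟩ : ∃ m, m = r + δ - 1 := ⟨_, rfl⟩
  rw [← hm] at hdvd hρ hab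
  have hnm : n = ρ * m := by
    rw [hρ, Nat.div_mul_cancel (hdvd.trans (Nat.gcd_dvd_left _ _))]
  have hρ0 : 0 < ρ := Nat.pos_of_ne_zero fun h => hn.ne' (by rw [hnm, h, zero_mul])
  have hαm : IsPrimitiveRoot α m := by
    rw [hα]
    exact hξ.pow hn hnm
  have hα0 : α ≠ 0 := hαm.ne_zero (by omega)
  have hγ0 : γ ≠ 0 := by
    rw [hγ]
    exact zpow_ne_zero a hα0
  have hγρ : γ ^ ρ = α ^ δ := by
    have hδa : a * (ρ : ℤ) = δ - (m : ℤ) * b := by linarith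
    rw [hγ, ← zpow_natCast, ← zpow_mul, hδa, zpow_sub₀ hα0, zpow_mul, zpow_natCast, zpow_natCast,
      hαm.pow_eq_one, one_zpow, div_one]
  refine hcard.not_gt ?_
  rw [← support_map_of_injective c (algebraMap F K).injective]
  refine lt_card_support_of_dvd hδ hρ0 hαm hα0 hγ0 hγρ
    ((Polynomial.map_ne_zero_iff (algebraMap F K).injective).2 hc) (fun e he => ?_)
    (fun i hi => (Dvd.dvd.mul_left (Finset.dvd_prod_of_mem (fun i => X ^ ρ - C (α ^ i)) hi) _).trans
      hdvd') ?_ ?_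
  · rw [← hnm]
    exact (le_natDegree_of_mem_supp e he).trans_lt (natDegree_map_le.trans_lt hdeg)
  · exact eval_eq_zero_of_dvd_of_eval_eq_zero hdvd' (by
      rw [eval_mul, eval_mul, eval_sub, eval_X, eval_one, sub_self, zero_mul, zero_mul])
  · exact eval_eq_zero_of_dvd_of_eval_eq_zero hdvd' (by
      rw [eval_mul, eval_mul, eval_sub X (C γ), eval_X, eval_C, sub_self, mul_zero, zero_mul])
end
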